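/- arXiv:1809.04672 — 2 statements merged into one kernel-verified Lean document; each statement's English description precedes it below -/
import Mathlib

section
/- Let σ be a real number and f : (0,∞) → ℂ a measurable function such that ∫₀^∞ |f(r)| r^σ dr/r < ∞ and ∫₀^∞ |f(r)|² r^{2σ} dr/r < ∞. Then for every real τ the Mellin transform mellin f (σ + iτ) is defined by an absolutely convergent integral, and the Plancherel identity ∫_ℝ |mellin f (σ + iτ)|² dτ = 2π ∫₀^∞ |f(r)|² r^{2σ} dr/r holds. -/
/-!
The substitution `r = exp (-u)` turns `mellin f (σ + iτ)` into the Fourier integral, at frequency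
`τ / (2π)`, of `g u = exp (-σ u) f (exp (-u))` (`mellin_eq_fourier`). It also turns the two
hypotheses into `g ∈ L¹` and `g ∈ L²`, and `∫ ‖f r‖² r^(2σ) dr/r` into `∫ ‖g u‖² du`. The identity
is then Plancherel's theorem for `g`, the factor `2π` coming from the scaling of the frequency.

Plancherel's theorem is available in Mathlib for the Fourier transform on the space `L²`, which is
defined by extension from Schwartz functions. For `g ∈ L¹ ∩ L²` this transform agrees almost
everywhere with the Fourier integral, since both have the same pairing with every test function
(`fourier_toLp_ae_eq`).
-/

open MeasureTheory

open scoped FourierTransform SchwartzMap ContDiff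

/-- On `L¹ ∩ L²` the `L²` Fourier transform is given by the Fourier integral. -/
lemma fourier_toLp_ae_eq {g : ℝ → ℂ} (hg1 : Integrable g) (hg2 : MemLp g 2) :
    ((𝓕 (hg2.toLp g) : Lp (α := ℝ) ℂ 2) : ℝ → ℂ) =ᵐ[volume] 𝓕 g := by
  have hcont : Continuous (𝓕 g) :=
    VectorFourier.fourierIntegral_continuous Real.continuous_fourierChar
      (by exact continuous_inner) hg1
  apply ae_eq_of_integral_contDiff_smul_eq
    ((Lp.memLp _).locallyIntegrable (by norm_num)) hcont.locallyIntegrable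
  intro φ φ_smooth φ_cpt
  have h₁ : HasCompactSupport (Complex.ofRealCLM ∘ φ) := φ_cpt.comp_left rfl
  have h₂ : ContDiff ℝ ∞ (Complex.ofRealCLM ∘ φ) := by fun_prop
  let ψ : 𝓢(ℝ, ℂ) := h₁.toSchwartzMap h₂
  have hψ : ∀ x, ψ x = (φ x : ℂ) := fun x => rfl
  have key := congrArg (fun T => T ψ) (Lp.fourier_toTemperedDistribution_eq (hg2.toLp g))
  simp only [TemperedDistribution.fourier_apply, Lp.toTemperedDistribution_apply] at key
  -- Fubini moves the Fourier integral from the test function to the integrable function `g`.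
  have flip : ∫ ξ, (𝓕 (ψ : ℝ → ℂ) ξ) • g ξ = ∫ x, ψ x • 𝓕 g x := by
    have := VectorFourier.integral_fourierIntegral_smul_eq_flip (μ := volume) (ν := volume)
      (L := innerₗ ℝ) Real.continuous_fourierChar (by exact continuous_inner) ψ.integrable hg1
    rw [flip_innerₗ] at this
    exact this
  have hL : ∫ x, (𝓕 ψ) x • (hg2.toLp g) x = ∫ ξ, (𝓕 (ψ : ℝ → ℂ) ξ) • g ξ := by
    apply integral_congr_ae
    filter_upwards [hg2.coeFn_toLp] with x hx
    rw [hx, SchwartzMap.fourier_coe]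
  rw [hL, flip] at key
  simpa [hψ] using key.symm

/-- Plancherel's theorem for the Fourier integral on `L¹ ∩ L²`. -/
lemma integral_norm_sq_fourier {g : ℝ → ℂ} (hg1 : Integrable g) (hg2 : MemLp g 2) :
    ∫ x, ‖𝓕 g x‖ ^ 2 = ∫ x, ‖g x‖ ^ 2 := by
  have sq (h : Lp (α := ℝ) ℂ 2) : ∫ x, ‖h x‖ ^ 2 = ‖h‖ ^ 2 := by
    have := @inner_self_eq_norm_sq_to_K ℂ _ _ _ _ h
    rw [L2.inner_def] at this
    simp only [inner_self_eq_norm_sq_to_K, RCLike.ofReal_eq_complex_ofReal] at this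
    exact_mod_cast this
  calc ∫ x, ‖𝓕 g x‖ ^ 2 = ∫ x, ‖(𝓕 (hg2.toLp g) : Lp (α := ℝ) ℂ 2 volume) x‖ ^ 2 := by
        apply integral_congr_ae
        filter_upwards [fourier_toLp_ae_eq hg1 hg2] with x hx
        rw [hx]
    _ = ∫ x, ‖(hg2.toLp g : Lp (α := ℝ) ℂ 2) x‖ ^ 2 := by rw [sq, sq, Lp.norm_fourier_eq]
    _ = ∫ x, ‖g x‖ ^ 2 := by
        apply integral_congr_ae
        filter_upwards [hg2.coeFn_toLp] with x hx
        rw [hx]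

lemma image_exp_neg_univ : (fun u : ℝ => Real.exp (-u)) '' Set.univ = Set.Ioi 0 := by
  rw [Set.image_univ, ← Real.range_exp]
  exact neg_surjective.range_comp Real.exp

lemma hasDerivWithinAt_exp_neg (u : ℝ) (_ : u ∈ Set.univ) :
    HasDerivWithinAt (fun u : ℝ => Real.exp (-u)) (-Real.exp (-u)) Set.univ u := by
  simpa using (hasDerivAt_neg u).exp

lemma injOn_exp_neg : Set.InjOn (fun u : ℝ => Real.exp (-u)) Set.univ :=
  fun _ _ _ _ h => neg_injective (Real.exp_injective h)

lemma integral_Ioi_eq_integral_exp_neg (F : ℝ → ℝ) :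
    ∫ r in Set.Ioi (0 : ℝ), F r = ∫ u, Real.exp (-u) * F (Real.exp (-u)) := by
  rw [← image_exp_neg_univ, integral_image_eq_integral_abs_deriv_smul MeasurableSet.univ
    hasDerivWithinAt_exp_neg injOn_exp_neg]
  simp

lemma integrableOn_Ioi_iff_exp_neg (F : ℝ → ℝ) :
    IntegrableOn F (Set.Ioi 0) ↔ Integrable fun u => Real.exp (-u) * F (Real.exp (-u)) := by
  rw [← image_exp_neg_univ, integrableOn_image_iff_integrableOn_abs_deriv_smul MeasurableSet.univ
    hasDerivWithinAt_exp_neg injOn_exp_neg]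
  simp

/-- Plancherel identity for the Mellin transform along the vertical line `Re z = σ`:
`∫_ℝ |mellin f (σ + iτ)|² dτ = 2π ∫₀^∞ |f(r)|² r^{2σ} dr/r`. -/
theorem stmt_2 (σ : ℝ) (f : ℝ → ℂ) (hf : Measurable f)
    (h1 : IntegrableOn (fun r => ‖f r‖ * r ^ (σ - 1)) (Set.Ioi 0))
    (h2 : IntegrableOn (fun r => ‖f r‖ ^ 2 * r ^ (2 * σ - 1)) (Set.Ioi 0)) :
    (∀ τ : ℝ, MellinConvergent f ((σ : ℂ) + (τ : ℂ) * Complex.I)) ∧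
      ∫ τ : ℝ, ‖mellin f ((σ : ℂ) + (τ : ℂ) * Complex.I)‖ ^ 2
        = 2 * Real.pi * ∫ r in Set.Ioi (0 : ℝ), ‖f r‖ ^ 2 * r ^ (2 * σ - 1) := by
  constructor
  · intro τ
    refine Integrable.mono' h1 (by fun_prop) ?_
    filter_upwards [self_mem_ae_restrict measurableSet_Ioi] with r hr
    rw [norm_smul, Complex.norm_cpow_eq_rpow_re_of_pos hr, mul_comm]
    simp
  set g : ℝ → ℂ := fun u => Real.exp (-σ * u) • f (Real.exp (-u)) with hg
  have hgm : Measurable g := by fun_prop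
  have hn (u : ℝ) : ‖g u‖ = Real.exp (-σ * u) * ‖f (Real.exp (-u))‖ := by
    rw [hg, norm_smul, Real.norm_eq_abs, Real.abs_exp]
  have e1 (u : ℝ) :
      Real.exp (-u) * (‖f (Real.exp (-u))‖ * Real.exp (-u) ^ (σ - 1)) = ‖g u‖ := by
    rw [hn, ← Real.exp_mul, mul_left_comm, ← Real.exp_add, mul_comm]
    ring_nf
  have e2 (u : ℝ) :
      Real.exp (-u) * (‖f (Real.exp (-u))‖ ^ 2 * Real.exp (-u) ^ (2 * σ - 1)) = ‖g u‖ ^ 2 := by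
    rw [hn, mul_pow, ← Real.exp_mul, mul_left_comm, ← Real.exp_add, mul_comm, ← Real.exp_nat_mul]
    push_cast
    ring_nf
  have hg1 : Integrable g := by
    rw [integrableOn_Ioi_iff_exp_neg] at h1
    simp only [e1] at h1
    exact (integrable_norm_iff hgm.aestronglyMeasurable).1 h1
  have hg2 : MemLp g 2 := by
    rw [integrableOn_Ioi_iff_exp_neg] at h2
    simp only [e2] at h2
    exact (memLp_two_iff_integrable_sq_norm hgm.aestronglyMeasurable).2 h2
  have hm (τ : ℝ) : mellin f ((σ : ℂ) + (τ : ℂ) * Complex.I) = 𝓕 g (τ / (2 * Real.pi)) := by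
    rw [mellin_eq_fourier]
    simp [hg]
  simp only [hm]
  rw [Measure.integral_comp_div (fun x => ‖𝓕 g x‖ ^ 2), integral_norm_sq_fourier hg1 hg2,
    integral_Ioi_eq_integral_exp_neg, abs_of_pos Real.two_pi_pos, smul_eq_mul]
  simp only [e2]
end

section
/- Let m, b be real numbers with m + b < 0, and let g : (0,∞) → ℂ be measurable with ∫₀^∞ |g(r)|² r^{2b} dr/r < ∞. Then for almost every r > 0 the integral f̃(r) := -∫₀^∞ e^{ms} g(e^{-s} r) ds converges absolutely, f̃ is measurable, and ‖f̃·r^b‖ ≤ |m+b|^{-1} ‖g·r^b‖, where ‖h·r^σ‖ = (∫₀^∞ |h(r)|² r^{2σ} dr/r)^{1/2}. -/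
/-!
The estimate is a Schur test for the dilation-invariant operator
`g ↦ ∫₀^∞ e^{ms} g(e^{-s} ·) ds`. Put `a = m + b < 0`. The Cauchy–Schwarz inequality on the
splitting `h = e^{as/2} · (e^{-as/2} h)` gives `(∫ h ds)² ≤ |a|⁻¹ ∫ e^{-as} h² ds`
(`sq_lintegral_le`). Apply it with `h(s) = e^{ms} |g(e^{-s} r)|`, integrate against
`r^{2b-1} dr` and exchange the integrals by Tonelli. The dilation `r ↦ e^{-s} r` multiplies the
weighted norm squared by `e^{2bs}` (`lintegral_dilation`), so the remaining integral in `s` is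
`∫ e^{-as + 2ms + 2bs} ds = ∫ e^{as} ds = |a|⁻¹` (`lintegral_exp`), and the total constant is
`|a|⁻²` (`lintegral_sq_le`).

Carried out with values in `[0, ∞]`, the bound needs no prior integrability. Finiteness of its
right-hand side yields absolute convergence for almost every `r`, and the real-valued inequality
follows from `‖∫ f‖ ≤ ∫ ‖f‖`.
-/

open MeasureTheory

lemma lintegral_exp {a : ℝ} (ha : a < 0) :
    ∫⁻ s in Set.Ioi (0 : ℝ), ENNReal.ofReal (Real.exp (a * s)) = ENNReal.ofReal |a|⁻¹ := by
  rw [← ofReal_integral_eq_lintegral_ofReal (integrableOn_exp_mul_Ioi ha 0)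
    (Filter.Eventually.of_forall fun s => (Real.exp_pos _).le), integral_exp_mul_Ioi ha,
    abs_of_neg ha]
  congr 1
  simp [neg_div, inv_neg]

/-- Cauchy–Schwarz on `(0, ∞)` against the exponential weight `e^{as}`, whose total mass is
`|a|⁻¹`. -/
lemma sq_lintegral_le {a : ℝ} (ha : a < 0) {h : ℝ → ENNReal} (hh : Measurable h) :
    (∫⁻ s in Set.Ioi (0 : ℝ), h s) ^ 2 ≤
      ENNReal.ofReal |a|⁻¹ *
        ∫⁻ s in Set.Ioi (0 : ℝ), ENNReal.ofReal (Real.exp (-a * s)) * h s ^ 2 := by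
  have hsplit : ∀ s, h s = ENNReal.ofReal (Real.exp (a * s / 2)) *
      (ENNReal.ofReal (Real.exp (-a * s / 2)) * h s) := by
    intro s
    rw [← mul_assoc, ← ENNReal.ofReal_mul (Real.exp_pos _).le, ← Real.exp_add]
    rw [show a * s / 2 + -a * s / 2 = 0 by ring]
    simp
  have hsq : ∀ c : ℝ, ENNReal.ofReal (Real.exp (c / 2)) ^ 2 = ENNReal.ofReal (Real.exp c) := by
    intro c
    rw [← ENNReal.ofReal_pow (Real.exp_pos _).le, ← Real.exp_nat_mul]
    congr 2
    push_cast
    ring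
  have key := ENNReal.lintegral_mul_le_Lp_mul_Lq (volume.restrict (Set.Ioi (0 : ℝ)))
    Real.HolderConjugate.two_two
    (f := fun s => ENNReal.ofReal (Real.exp (a * s / 2)))
    (g := fun s => ENNReal.ofReal (Real.exp (-a * s / 2)) * h s)
    (by fun_prop) (by fun_prop)
  simp only [Pi.mul_apply, ← hsplit, ENNReal.rpow_two, mul_pow, hsq, lintegral_exp ha] at key
  have hroot : ∀ x : ENNReal, (x ^ (1 / 2 : ℝ)) ^ 2 = x := by
    intro x
    rw [← ENNReal.rpow_two, ← ENNReal.rpow_mul]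
    norm_num
  calc _ ≤ _ := pow_le_pow_left' key 2
    _ = _ := by rw [mul_pow, hroot, hroot]

/-- Behaviour of the norm squared in `L²((0,∞), r^{2b} dr/r)` under the dilation `r ↦ e^{-s} r`. -/
lemma lintegral_dilation (b s : ℝ) (g : ℝ → ℂ) :
    ∫⁻ r in Set.Ioi (0 : ℝ), ‖g (Real.exp (-s) * r)‖ₑ ^ 2 * ENNReal.ofReal (r ^ (2 * b - 1)) =
      ENNReal.ofReal (Real.exp (2 * b * s)) *
        ∫⁻ r in Set.Ioi (0 : ℝ), ‖g r‖ₑ ^ 2 * ENNReal.ofReal (r ^ (2 * b - 1)) := by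
  have hw := Real.exp_pos (-s)
  have h1 := lintegral_image_eq_lintegral_abs_deriv_mul (s := Set.Ioi (0 : ℝ))
    (f := fun r => Real.exp (-s) * r) (f' := fun _ => Real.exp (-s)) measurableSet_Ioi
    (fun x _ => by simpa using ((hasDerivAt_id x).const_mul (Real.exp (-s))).hasDerivWithinAt)
    (mul_right_injective₀ hw.ne').injOn
    (fun r => ‖g r‖ₑ ^ 2 * ENNReal.ofReal (r ^ (2 * b - 1)))
  rw [Set.image_const_mul_Ioi_zero hw] at h1
  rw [h1, ← lintegral_const_mul' _ _ ENNReal.ofReal_ne_top]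
  refine setLIntegral_congr_fun measurableSet_Ioi fun r hr => ?_
  have hr : 0 < r := hr
  have hc : Real.exp (2 * b * s) * (Real.exp (-s) * (Real.exp (-s) * r) ^ (2 * b - 1)) =
      r ^ (2 * b - 1) := by
    rw [Real.mul_rpow hw.le hr.le, ← Real.exp_mul, ← mul_assoc, ← mul_assoc, ← Real.exp_add,
      ← Real.exp_add, show 2 * b * s + -s + -s * (2 * b - 1) = 0 by ring]
    simp
  rw [← hc, ENNReal.ofReal_mul (Real.exp_pos _).le, ENNReal.ofReal_mul hw.le, abs_of_pos hw]
  ring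

/-- The weighted bound for the operator with absolute values inside the integral, valid in
`[0, ∞]`. -/
lemma lintegral_sq_le (m b : ℝ) (hmb : m + b < 0) (g : ℝ → ℂ) (hg : Measurable g) :
    ∫⁻ r in Set.Ioi (0 : ℝ),
        (∫⁻ s in Set.Ioi (0 : ℝ), ‖Real.exp (m * s) • g (Real.exp (-s) * r)‖ₑ) ^ 2
          * ENNReal.ofReal (r ^ (2 * b - 1)) ≤
      ENNReal.ofReal |m + b|⁻¹ ^ 2 *
        ∫⁻ r in Set.Ioi (0 : ℝ), ‖g r‖ₑ ^ 2 * ENNReal.ofReal (r ^ (2 * b - 1)) := by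
  set a := m + b with ha
  set N := ∫⁻ r in Set.Ioi (0 : ℝ), ‖g r‖ₑ ^ 2 * ENNReal.ofReal (r ^ (2 * b - 1)) with hN
  have hpt : ∀ r s : ℝ, ENNReal.ofReal (Real.exp (-a * s)) *
      ‖Real.exp (m * s) • g (Real.exp (-s) * r)‖ₑ ^ 2 =
      ENNReal.ofReal (Real.exp (-a * s + 2 * m * s)) * ‖g (Real.exp (-s) * r)‖ₑ ^ 2 := by
    intro r s
    rw [enorm_smul, mul_pow, Real.enorm_of_nonneg (Real.exp_pos _).le,
      ← ENNReal.ofReal_pow (Real.exp_pos _).le, ← Real.exp_nat_mul, ← mul_assoc,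
      ← ENNReal.ofReal_mul (Real.exp_pos _).le, ← Real.exp_add]
    congr 4
    push_cast
    ring
  calc _ ≤ ∫⁻ r in Set.Ioi (0 : ℝ), ENNReal.ofReal |a|⁻¹ * ∫⁻ s in Set.Ioi (0 : ℝ),
          ENNReal.ofReal (Real.exp (-a * s + 2 * m * s)) *
            (‖g (Real.exp (-s) * r)‖ₑ ^ 2 * ENNReal.ofReal (r ^ (2 * b - 1))) := by
        refine lintegral_mono fun r => ?_
        refine (mul_le_mul_left (sq_lintegral_le hmb (by fun_prop)) _).trans_eq ?_
        simp only [hpt]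
        rw [mul_assoc, ← lintegral_mul_const' _ _ ENNReal.ofReal_ne_top]
        simp only [mul_assoc]
    _ = ENNReal.ofReal |a|⁻¹ * ∫⁻ s in Set.Ioi (0 : ℝ), ∫⁻ r in Set.Ioi (0 : ℝ),
          ENNReal.ofReal (Real.exp (-a * s + 2 * m * s)) *
            (‖g (Real.exp (-s) * r)‖ₑ ^ 2 * ENNReal.ofReal (r ^ (2 * b - 1))) := by
        rw [lintegral_const_mul' _ _ ENNReal.ofReal_ne_top, lintegral_lintegral_swap]
        refine Measurable.aemeasurable ?_
        unfold Function.uncurry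
        fun_prop
    _ = ENNReal.ofReal |a|⁻¹ * ∫⁻ s in Set.Ioi (0 : ℝ),
          ENNReal.ofReal (Real.exp (a * s)) * N := by
        congr 1
        refine lintegral_congr fun s => ?_
        rw [lintegral_const_mul' _ _ ENNReal.ofReal_ne_top, lintegral_dilation, ← mul_assoc,
          ← ENNReal.ofReal_mul (Real.exp_pos _).le, ← Real.exp_add]
        congr 3
        rw [ha]
        ring
    _ = _ := by
        rw [lintegral_mul_const _ (by fun_prop), lintegral_exp hmb, ← mul_assoc, sq]

/-- The backward solution operator `f̃(r) = -∫₀^∞ e^{ms} g(e^{-s} r) ds` of the twisted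
cohomological equation is a.e. absolutely convergent, measurable, and satisfies the
weighted bound `‖f̃·r^b‖ ≤ |m+b|⁻¹ ‖g·r^b‖` in `L²((0,∞), dr/r)` when `m + b < 0`. -/
theorem stmt_12 (m b : ℝ) (hmb : m + b < 0) (g : ℝ → ℂ) (hg : Measurable g)
    (hg2 : IntegrableOn (fun r => ‖g r‖ ^ 2 * r ^ (2 * b - 1)) (Set.Ioi 0)) :
    (∀ᵐ r ∂(volume.restrict (Set.Ioi (0 : ℝ))),
        IntegrableOn (fun s => Real.exp (m * s) • g (Real.exp (-s) * r)) (Set.Ioi 0)) ∧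
      Measurable (fun r => -∫ s in Set.Ioi (0 : ℝ), Real.exp (m * s) • g (Real.exp (-s) * r)) ∧
      Real.sqrt (∫ r in Set.Ioi (0 : ℝ),
          ‖-∫ s in Set.Ioi (0 : ℝ), Real.exp (m * s) • g (Real.exp (-s) * r)‖ ^ 2
            * r ^ (2 * b - 1)) ≤
        |m + b|⁻¹ * Real.sqrt (∫ r in Set.Ioi (0 : ℝ), ‖g r‖ ^ 2 * r ^ (2 * b - 1)) := by
  have hmeas2 : Measurable (fun p : ℝ × ℝ => Real.exp (m * p.2) • g (Real.exp (-p.2) * p.1)) := by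
    fun_prop
  have hF : Measurable
      (fun r => -∫ s in Set.Ioi (0 : ℝ), Real.exp (m * s) • g (Real.exp (-s) * r)) :=
    (hmeas2.stronglyMeasurable.integral_prod_right'
      (ν := volume.restrict (Set.Ioi (0 : ℝ)))).measurable.neg
  have hG : Measurable
      (fun r => ∫⁻ s in Set.Ioi (0 : ℝ), ‖Real.exp (m * s) • g (Real.exp (-s) * r)‖ₑ) :=
    hmeas2.enorm.lintegral_prod_right'
  have henorm : ∀ (z : ℂ) (t : ℝ),
      ENNReal.ofReal (‖z‖ ^ 2 * t) = ‖z‖ₑ ^ 2 * ENNReal.ofReal t := by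
    intro z t
    rw [ENNReal.ofReal_mul (by positivity), ENNReal.ofReal_pow (norm_nonneg _), ofReal_norm]
  have hnonneg : ∀ u : ℝ → ℂ,
      0 ≤ᵐ[volume.restrict (Set.Ioi (0 : ℝ))] fun r => ‖u r‖ ^ 2 * r ^ (2 * b - 1) := by
    intro u
    filter_upwards [ae_restrict_mem measurableSet_Ioi] with r hr
    have hr : 0 < r := hr
    exact mul_nonneg (by positivity) (Real.rpow_nonneg hr.le _)
  have hI := ofReal_integral_eq_lintegral_ofReal hg2 (hnonneg g)
  simp only [henorm] at hI
  have hmain := lintegral_sq_le m b hmb g hg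
  rw [← hI] at hmain
  have hfin := ne_top_of_le_ne_top (by finiteness) hmain
  refine ⟨?_, hF, ?_⟩
  · filter_upwards [ae_lt_top ((hG.pow_const 2).mul (by fun_prop)) hfin,
      ae_restrict_mem measurableSet_Ioi] with r hr hr0
    have hr0 : 0 < r := hr0
    refine ⟨Measurable.aestronglyMeasurable (by fun_prop), ?_⟩
    rw [HasFiniteIntegral, lt_top_iff_ne_top]
    intro htop
    rw [Pi.mul_apply, htop] at hr
    have hpos : ENNReal.ofReal (r ^ (2 * b - 1)) ≠ 0 := by
      simpa using Real.rpow_pos_of_pos hr0 _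
    simp [ENNReal.top_mul hpos] at hr
  · set J := ∫ r in Set.Ioi (0 : ℝ), ‖g r‖ ^ 2 * r ^ (2 * b - 1) with hJ
    have hJ0 : 0 ≤ J := integral_nonneg_of_ae (hnonneg g)
    rw [← Real.sqrt_sq (inv_nonneg.2 (abs_nonneg (m + b))), ← Real.sqrt_mul (sq_nonneg _)]
    refine Real.sqrt_le_sqrt ?_
    rw [integral_eq_lintegral_of_nonneg_ae (hnonneg _)
      (Measurable.aestronglyMeasurable ((hF.norm.pow_const 2).mul (by fun_prop)))]
    refine ENNReal.toReal_le_of_le_ofReal (by positivity) ?_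
    rw [ENNReal.ofReal_mul (sq_nonneg _), ENNReal.ofReal_pow (by positivity)]
    refine le_trans (lintegral_mono fun r => ?_) hmain
    rw [henorm, enorm_neg]
    gcongr
    exact enorm_integral_le_lintegral_enorm _
end
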